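/- For any odd positive integer n and any integer m ≥ 3, there are infinitely many integers d (with all the relevant radicands negative) such that n divides the class number of each of the imaginary quadratic fields ℚ(√d), ℚ(√(d+1)), ℚ(√(d+4)), and ℚ(√(d + 4q^2)) for every odd prime q ≤ m; in particular, for each such d one obtains a tuple of at least π(m) + 2 imaginary quadratic fields whose class numbers are all divisible by n, where π is the prime-counting function. -/

import Mathlib

/-!
An odd `n` divides the class number of an imaginary quadratic field `ℚ(√d)` other than `ℚ(√-3)` as
soon as there is an integer `β` of the field whose trace `t ≠ 0` is coprime to, and tiny compared
with, `W`, where `β` has norm `W ^ n`. Indeed `β` and its conjugate are then coprime, so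
`(β) = A ^ n` for some ideal `A`. If the class of `A` had order less than `n`, then `β` would be,
up to a unit, a `p`-th power for some prime `p ∣ n`; all units have order dividing `4`, so
`β = γ ^ p`. With `a` and `N` the trace and norm of `γ`, the trace of `γ ^ p` is the value at `a` of
a Dickson polynomial, `t = a ^ p - p N a ^ (p - 2) + ⋯`, divisible by `a`. Hence `|a| ≤ |t|`, and
reading the identity first modulo `N` and then modulo `N ^ 2` gives `t = a ^ p` and
`p a ^ (p - 2) = 0`, a contradiction.

Put `U = 4 V ^ n - 1` and `d = -U ^ n`, with `V` a large multiple of `3 * m!`. The element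
`s + √(d + s ^ 2)` has trace `2 s` and norm `U ^ n`, and `2 s` is coprime to `U` for `0 < s ≤ m`. As
`n` is odd, `ℚ(√d) = ℚ(√(-U))`, where `(1 + √(-U)) / 2` has trace `1` and norm `V ^ n`. So `n`
divides the class number of `ℚ(√(d + s ^ 2))` for every `0 ≤ s ≤ m`, and the radicands in question
are those with `s ∈ {0, 1, 2, 2 q}`.
-/

/-- The quadratic field `ℚ(√d)`, realized as the subfield of `ℂ` generated over `ℚ`
by a complex square root of `d`. -/
noncomputable def Qsqrt (d : ℤ) : IntermediateField ℚ ℂ :=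
  IntermediateField.adjoin ℚ {((d : ℂ) ^ ((1 : ℂ) / 2))}

/-- The class number of `ℚ(√d)`: the order of the ideal class group of its ring of
integers. -/
noncomputable def classNumSqrt (d : ℤ) : ℕ :=
  Nat.card (ClassGroup (NumberField.RingOfIntegers (Qsqrt d)))

open NumberField Polynomial IntermediateField nonZeroDivisors

lemma two_mul_re_pow (z : ℂ) (k : ℕ) :
    2 * (z ^ k).re = (dickson 1 (Complex.normSq z) k).eval (2 * z.re) := by
  induction k using Nat.twoStepInduction with
  | zero => norm_num
  | one => simp
  | more k ih₀ ih₁ =>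
    rw [dickson_add_two, eval_sub, eval_mul, eval_mul, eval_X, eval_C, ← ih₀, ← ih₁]
    simp only [pow_succ, Complex.mul_re, Complex.mul_im, Complex.normSq_apply]
    ring

lemma sq_dvd_eval_dickson_sub {R : Type*} [CommRing R] (x a : R) (k : ℕ) :
    a ^ 2 ∣ (dickson 1 a (k + 2)).eval x - (x ^ (k + 2) - (k + 2) * a * x ^ k) := by
  induction k using Nat.twoStepInduction with
  | zero =>
    refine ⟨0, ?_⟩
    simp only [zero_add, dickson_two, eval_sub, eval_mul, eval_pow, eval_X, eval_C,
      eval_ofNat, eval_one, Nat.cast_zero, Nat.cast_one]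
    ring
  | one =>
    refine ⟨0, ?_⟩
    simp only [dickson_add_two, zero_add, dickson_one, dickson_zero, Nat.reduceAdd, Nat.cast_one,
      eval_sub, eval_mul, eval_X, eval_C, eval_ofNat, eval_one]
    ring
  | more k ih₀ ih₁ =>
    obtain ⟨e₀, h₀⟩ := ih₀
    obtain ⟨e₁, h₁⟩ := ih₁
    refine ⟨x * e₁ + (k + 2) * x ^ k - a * e₀, ?_⟩
    rw [dickson_add_two, eval_sub, eval_mul, eval_mul, eval_X, eval_C]
    push_cast at h₁ ⊢
    linear_combination x * h₁ - a * h₀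

lemma dvd_eval_dickson {R : Type*} [CommRing R] (x a : R) {k : ℕ} (hk : Odd k) :
    x ∣ (dickson 1 a k).eval x := by
  obtain ⟨j, rfl⟩ := hk
  induction j with
  | zero => simp
  | succ j ih =>
    rw [show 2 * (j + 1) + 1 = 2 * j + 1 + 2 by ring, dickson_add_two, eval_sub, eval_mul, eval_mul,
      eval_X, eval_C]
    exact dvd_sub (dvd_mul_right _ _) (ih.mul_left _)

lemma eval_dickson_ne {a N t : ℤ} {p : ℕ} (hp : Odd p) (hp1 : p ≠ 1) (ht : t ≠ 0)
    (hN : p * |t| ^ p < N) : (dickson 1 N p).eval a ≠ t := by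
  intro h
  have hat : a ∣ t := h ▸ dvd_eval_dickson a N hp
  have ha0 : a ≠ 0 := ne_zero_of_dvd_ne_zero ht hat
  have hat_le : |a| ≤ |t| := Int.le_of_dvd (abs_pos.2 ht) ((abs_dvd_abs a t).2 hat)
  have ht1 : 1 ≤ |t| := Int.one_le_abs ht
  obtain ⟨k, rfl⟩ : ∃ k, p = k + 2 := ⟨p - 2, by have := hp.pos; omega⟩
  have hpow_le : ∀ j ≤ k + 2, |a| ^ j ≤ |t| ^ (k + 2) := fun j hj =>
    (pow_le_pow_left₀ (abs_nonneg a) hat_le j).trans (pow_le_pow_right₀ ht1 hj)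
  have hNpos : 0 < N := lt_of_le_of_lt (by positivity) hN
  obtain ⟨e, he⟩ := h ▸ sq_dvd_eval_dickson_sub a N k
  push_cast at hN
  have htpow : t = a ^ (k + 2) := by
    have hdvd : N ∣ t - a ^ (k + 2) := ⟨N * e - (k + 2) * a ^ k, by linear_combination he⟩
    have hlt : |t - a ^ (k + 2)| < N := calc
      |t - a ^ (k + 2)| ≤ |t| + |a| ^ (k + 2) := (abs_sub _ _).trans_eq (by rw [abs_pow])
      _ ≤ |t| ^ (k + 2) + |t| ^ (k + 2) :=
        add_le_add (le_self_pow₀ ht1 (by simp)) (hpow_le _ le_rfl)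
      _ ≤ (k + 2) * |t| ^ (k + 2) := by nlinarith [pow_pos (zero_lt_one.trans_le ht1) (k + 2)]
      _ < N := hN
    exact sub_eq_zero.1 (Int.eq_zero_of_abs_lt_dvd hdvd hlt)
  have hdvd : N ∣ (k + 2) * a ^ k :=
    ⟨e, mul_left_cancel₀ hNpos.ne' (by linear_combination he - htpow)⟩
  have hlt : |(k + 2) * a ^ k| < N := by
    rw [abs_mul, abs_pow, abs_of_nonneg (by positivity)]
    exact (mul_le_mul_of_nonneg_left (hpow_le k (by simp)) (by positivity)).trans_lt hN
  exact mul_ne_zero (by positivity) (pow_ne_zero k ha0) (Int.eq_zero_of_abs_lt_dvd hdvd hlt)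

lemma exists_pow_eq_of_associated_pow {M : Type*} [CommMonoid M] {k p : ℕ} {α β : M}
    (hunits : ∀ u : Mˣ, u ^ k = 1) (hpk : p.Coprime k) (h : Associated (α ^ p) β) :
    ∃ γ, γ ^ p = β := by
  obtain ⟨u, rfl⟩ := h
  obtain ⟨m, hm⟩ := exists_pow_eq_self_of_coprime
    (hpk.coprime_dvd_right (orderOf_dvd_of_pow_eq_one (hunits u)))
  refine ⟨α * (u ^ m : Mˣ), ?_⟩
  rw [mul_pow, ← Units.val_pow_eq_pow_val, pow_right_comm, hm]

lemma dvd_natCard_classGroup_of_mul_eq_pow {R : Type*} [CommRing R] [IsDedekindDomain R]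
    {β γ w : R} {n : ℕ} (hn : n ≠ 0) (hβ : β ≠ 0) (hcop : IsCoprime β γ) (hmul : β * γ = w ^ n)
    (hpow : ∀ p : ℕ, p.Prime → p ∣ n → ∀ α : R, ¬ Associated (α ^ p) β) :
    n ∣ Nat.card (ClassGroup R) := by
  obtain ⟨A, hA⟩ := exists_eq_pow_of_mul_eq_pow_of_coprime
    (Ideal.isCoprime_span_singleton_iff β γ |>.2 hcop) (c := Ideal.span {w}) (n := n)
    (by rw [Ideal.span_singleton_mul_span_singleton, Ideal.span_singleton_pow, hmul])
  have hA0 : A ∈ (Ideal R)⁰ := by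
    refine mem_nonZeroDivisors_of_ne_zero fun h => hβ ?_
    rwa [h, zero_pow hn, Ideal.zero_eq_bot, Ideal.span_singleton_eq_bot] at hA
  have hmk : ∀ k : ℕ, ClassGroup.mk0 ⟨A, hA0⟩ ^ k = 1 ↔ (A ^ k).IsPrincipal := fun k => by
    rw [← map_pow, ← ClassGroup.mk0_eq_one_iff (pow_mem hA0 k)]
    rfl
  have horder : orderOf (ClassGroup.mk0 ⟨A, hA0⟩) = n := by
    refine orderOf_eq_of_pow_and_pow_div_prime hn.pos ?_ fun p hp hpn h => ?_
    · exact (hmk n).2 (hA ▸ ⟨β, rfl⟩)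
    · obtain ⟨α, hα⟩ := (hmk _).1 h
      refine hpow p hp hpn α (Ideal.span_singleton_eq_span_singleton.1 ?_)
      rw [← Ideal.span_singleton_pow, ← Ideal.submodule_span_eq, ← hα, ← pow_mul,
        Nat.div_mul_cancel hpn, hA]
  exact horder ▸ orderOf_dvd_natCard _

lemma exists_eq_add_mul_of_mem_adjoin_simple {F E : Type*} [Field F] [Field E] [Algebra F E]
    {c : F} {z v : E} (hz : z ^ 2 = algebraMap F E c) (hv : v ∈ F⟮z⟯) :
    ∃ x y : F, v = algebraMap F E x + algebraMap F E y * z := by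
  have hmonic : (X ^ 2 - C c).Monic := monic_X_pow_sub_C c two_ne_zero
  have hroot : aeval z (X ^ 2 - C c) = 0 := by simp [hz]
  have hint : IsIntegral F z := ⟨_, hmonic, hroot⟩
  rw [← mem_toSubalgebra, adjoin_simple_toSubalgebra_of_isAlgebraic hint.isAlgebraic,
    Algebra.adjoin_singleton_eq_range_aeval] at hv
  obtain ⟨P, rfl⟩ := hv
  have hdegree : (X ^ 2 - C c).natDegree = 2 := natDegree_X_pow_sub_C
  have hlt := natDegree_modByMonic_lt P hmonic fun h => by simp [h] at hdegree
  obtain ⟨y, x, hxy⟩ := exists_eq_X_add_C_of_natDegree_le_one (Nat.lt_succ_iff.1 (hdegree ▸ hlt))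
  refine ⟨x, y, ?_⟩
  change aeval z P = _
  rw [← aeval_modByMonic_eq_self_of_root hroot, hxy]
  simp [add_comm]

lemma cpow_half_sq (z : ℂ) : (z ^ ((1 : ℂ) / 2)) ^ 2 = z := by
  rw [one_div, Complex.cpow_ofNat_inv_pow]

lemma re_eq_zero_and_im_sq_eq {x : ℝ} (hx : x < 0) {z : ℂ} (hz : z ^ 2 = x) :
    z.re = 0 ∧ z.im ^ 2 = -x := by
  have hre := congrArg Complex.re hz
  have him := congrArg Complex.im hz
  simp only [sq, Complex.mul_re, Complex.mul_im, Complex.ofReal_re, Complex.ofReal_im] at hre him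
  have hre0 : z.re = 0 := by
    rcases mul_eq_zero.1 (by linarith : z.re * z.im = 0) with h | h
    · exact h
    · nlinarith
  exact ⟨hre0, by rw [hre0] at hre; linarith⟩

lemma exists_int_eq_of_isIntegral_ratCast {K : Type*} [Field K] [CharZero K] {x : ℚ}
    (hx : IsIntegral ℤ (x : K)) : ∃ a : ℤ, x = a := by
  rw [← eq_ratCast (algebraMap ℚ K), isIntegral_algebraMap_iff (algebraMap ℚ K).injective,
    IsIntegrallyClosed.isIntegral_iff] at hx
  obtain ⟨a, rfl⟩ := hx
  exact ⟨a, rfl⟩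

lemma exists_int_eq_two_mul_re {v : ℂ} (hv : IsIntegral ℤ v) {x : ℚ} (hx : v.re = x) :
    ∃ a : ℤ, 2 * v.re = a := by
  have hsum : IsIntegral ℤ (((2 * x : ℚ) : ℝ) : ℂ) := by
    have := hv.add (map_isIntegral_int (starRingEnd ℂ) hv)
    rwa [Complex.add_conj, hx, ← Rat.cast_ofNat, ← Rat.cast_mul] at this
  obtain ⟨a, ha⟩ := exists_int_eq_of_isIntegral_ratCast (mod_cast hsum)
  exact ⟨a, by rw [hx]; exact mod_cast ha⟩

lemma exists_nat_eq_normSq {v : ℂ} (hv : IsIntegral ℤ v) {x : ℚ} (hx : Complex.normSq v = x) :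
    ∃ N : ℕ, Complex.normSq v = N := by
  have hprod : IsIntegral ℤ (x : ℂ) := by
    have := hv.mul (map_isIntegral_int (starRingEnd ℂ) hv)
    rwa [Complex.mul_conj, hx, Complex.ofReal_ratCast] at this
  obtain ⟨a, rfl⟩ := exists_int_eq_of_isIntegral_ratCast hprod
  rw [Rat.cast_intCast] at hx
  lift a to ℕ using by exact_mod_cast hx ▸ Complex.normSq_nonneg v
  exact ⟨a, mod_cast hx⟩

lemma isIntegral_of_mul_sub_eq {R A : Type*} [CommRing R] [CommRing A] [Algebra R A] {b : A}
    {t M : R} (h : b * (algebraMap R A t - b) = algebraMap R A M) : IsIntegral R b := by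
  refine ⟨X ^ 2 - C t * X + C M, by monicity!, ?_⟩
  simp only [eval₂_add, eval₂_sub, eval₂_mul, eval₂_X_pow, eval₂_C, eval₂_X]
  linear_combination -h

namespace Qsqrt

lemma cpow_half_mem (d : ℤ) : (d : ℂ) ^ ((1 : ℂ) / 2) ∈ Qsqrt d :=
  mem_adjoin_simple_self ℚ _

instance (d : ℤ) : NumberField (Qsqrt d) where
  to_finiteDimensional := adjoin.finiteDimensional <| .of_pow two_pos <| by
    rw [cpow_half_sq]
    exact (isIntegral_algebraMap (R := ℤ) (x := d)).tower_top

lemma re_cpow_half_and_im_sq {d : ℤ} (hd : d < 0) :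
    ((d : ℂ) ^ ((1 : ℂ) / 2)).re = 0 ∧ ((d : ℂ) ^ ((1 : ℂ) / 2)).im ^ 2 = -d :=
  mod_cast re_eq_zero_and_im_sq_eq (x := d) (mod_cast hd) (mod_cast cpow_half_sq d)

lemma exists_re_eq_im_sq_eq {d : ℤ} (hd : d < 0) {v : ℂ} (hv : v ∈ Qsqrt d) :
    ∃ x y : ℚ, v.re = x ∧ v.im ^ 2 = -d * y ^ 2 := by
  obtain ⟨hre, him⟩ := re_cpow_half_and_im_sq hd
  obtain ⟨x, y, rfl⟩ := exists_eq_add_mul_of_mem_adjoin_simple (c := (d : ℚ))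
    (by rw [cpow_half_sq, map_intCast]) hv
  refine ⟨x, y, ?_, ?_⟩ <;>
    simp only [eq_ratCast, Complex.add_re, Complex.add_im, Complex.mul_re, Complex.mul_im,
      Complex.ratCast_re, Complex.ratCast_im, hre]
  · ring
  · linear_combination (y : ℝ) ^ 2 * him

lemma exists_two_mul_re_eq_normSq_eq {d : ℤ} (hd : d < 0) (v : 𝓞 (Qsqrt d)) :
    ∃ (a : ℤ) (N : ℕ) (y : ℚ),
      2 * (v : ℂ).re = a ∧ Complex.normSq v = N ∧ (a : ℚ) ^ 2 - 4 * N = d * y ^ 2 := by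
  obtain ⟨x, y, hre, him⟩ := exists_re_eq_im_sq_eq hd (v : Qsqrt d).2
  have hint : IsIntegral ℤ (v : ℂ) := map_isIntegral_int (Qsqrt d).val v.isIntegral_coe
  have hnorm : Complex.normSq v = (v : ℂ).re ^ 2 - d * y ^ 2 := by
    rw [Complex.normSq_apply, ← sq, ← sq, him]
    ring
  obtain ⟨a, ha⟩ := exists_int_eq_two_mul_re hint hre
  obtain ⟨N, hN⟩ := exists_nat_eq_normSq (x := x ^ 2 - d * y ^ 2) hint <| by
    rw [hnorm, hre]
    push_cast
    ring
  have hdisc : (a : ℝ) ^ 2 - 4 * N = d * (2 * y) ^ 2 := by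
    rw [← ha, ← hN, hnorm]
    ring
  exact ⟨a, N, 2 * y, ha, hN, mod_cast hdisc⟩

lemma coe_coe_injective (d : ℤ) : Function.Injective fun v : 𝓞 (Qsqrt d) => (v : ℂ) :=
  Subtype.val_injective.comp RingOfIntegers.coe_injective

lemma mul_trace_sub_eq_norm {d a N : ℤ} {v : 𝓞 (Qsqrt d)} (ha : 2 * (v : ℂ).re = a)
    (hN : Complex.normSq v = N) : v * (a - v) = N := by
  apply coe_coe_injective
  have ha' : (v : ℂ) + starRingEnd ℂ v = a := by
    rw [Complex.add_conj, ha, Complex.ofReal_intCast]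
  have hN' : (v : ℂ) * starRingEnd ℂ v = N := by
    rw [Complex.mul_conj, hN, Complex.ofReal_intCast]
  simp only [map_mul, map_sub, map_intCast, MulMemClass.coe_mul, AddSubgroupClass.coe_sub,
    SubringClass.coe_intCast]
  linear_combination hN' - v * ha'

lemma normSq_unit_eq_one {d : ℤ} (hd : d < 0) (u : (𝓞 (Qsqrt d))ˣ) :
    Complex.normSq (u : 𝓞 (Qsqrt d)) = 1 := by
  obtain ⟨-, N, -, -, hN, -⟩ := exists_two_mul_re_eq_normSq_eq hd (u : 𝓞 (Qsqrt d))
  obtain ⟨-, M, -, -, hM, -⟩ := exists_two_mul_re_eq_normSq_eq hd (↑u⁻¹ : 𝓞 (Qsqrt d))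
  have hmul : ((u : 𝓞 (Qsqrt d)) : ℂ) * (↑u⁻¹ : 𝓞 (Qsqrt d)) = 1 := by
    rw [← MulMemClass.coe_mul, ← map_mul, Units.mul_inv, map_one, OneMemClass.coe_one]
  have hNM : N * M = 1 := by
    have := congrArg Complex.normSq hmul
    rw [map_mul, hN, hM, map_one] at this
    exact_mod_cast this
  rw [hN, Nat.eq_one_of_mul_eq_one_right hNM, Nat.cast_one]

lemma eq_of_sq_sub_four_eq_mul_sq {d a : ℤ} {y : ℚ} (hd : d < 0) (hd3 : ¬ IsSquare (-3 * d))
    (h : (a : ℚ) ^ 2 - 4 = d * y ^ 2) : a = -2 ∨ a = 0 ∨ a = 2 := by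
  have hne : a ^ 2 ≠ 1 := fun ha => hd3 <| Rat.isSquare_intCast_iff.1 ⟨d * y, by
    have ha' : (a : ℚ) ^ 2 = 1 := mod_cast ha
    push_cast
    linear_combination d * h - d * ha'⟩
  have hle : a ^ 2 ≤ 2 ^ 2 := by
    have hdy : (d : ℚ) * y ^ 2 ≤ 0 :=
      mul_nonpos_of_nonpos_of_nonneg (mod_cast hd.le) (sq_nonneg y)
    have : (a : ℚ) ^ 2 ≤ 2 ^ 2 := by linarith
    exact_mod_cast this
  obtain ⟨hlower, hupper⟩ := abs_le_of_sq_le_sq' hle two_pos.le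
  interval_cases a <;> simp_all

lemma units_pow_four_eq_one {d : ℤ} (hd : d < 0) (hd3 : ¬ IsSquare (-3 * d))
    (u : (𝓞 (Qsqrt d))ˣ) : u ^ 4 = 1 := by
  obtain ⟨a, N, y, ha, hN, hdisc⟩ := exists_two_mul_re_eq_normSq_eq hd (u : 𝓞 (Qsqrt d))
  have hnorm := normSq_unit_eq_one hd u
  obtain rfl : N = 1 := mod_cast hN.symm.trans hnorm
  have hquad : (u : 𝓞 (Qsqrt d)) * (a - u) = 1 :=
    mod_cast mul_trace_sub_eq_norm ha (N := 1) (mod_cast hnorm)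
  have hu4 : (u : 𝓞 (Qsqrt d)) ^ 4 = 1 := by
    rcases eq_of_sq_sub_four_eq_mul_sq hd hd3 (mod_cast hdisc) with rfl | rfl | rfl
    · have hsq : (u + 1 : 𝓞 (Qsqrt d)) ^ 2 = 0 := by push_cast at hquad; linear_combination -hquad
      rw [eq_neg_of_add_eq_zero_left (eq_zero_of_pow_eq_zero hsq), Even.neg_one_pow (by decide)]
    · have hsq : (u : 𝓞 (Qsqrt d)) ^ 2 = -1 := by push_cast at hquad; linear_combination -hquad
      linear_combination ((u : 𝓞 (Qsqrt d)) ^ 2 - 1) * hsq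
    · have hsq : (u - 1 : 𝓞 (Qsqrt d)) ^ 2 = 0 := by push_cast at hquad; linear_combination -hquad
      rw [sub_eq_zero.1 (eq_zero_of_pow_eq_zero hsq), one_pow]
  exact Units.ext (by rw [Units.val_pow_eq_pow_val, hu4, Units.val_one])

lemma exists_ringOfIntegers_two_mul_re_eq_normSq_eq {d t M : ℤ} (hd : d < 0) {r : ℚ}
    (hr : d * r ^ 2 = t ^ 2 - 4 * M) :
    ∃ β : 𝓞 (Qsqrt d), 2 * (β : ℂ).re = t ∧ Complex.normSq β = M := by
  obtain ⟨hre, him⟩ := re_cpow_half_and_im_sq hd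
  have hsq := cpow_half_sq (d : ℂ)
  have hmem := cpow_half_mem d
  set z := (d : ℂ) ^ ((1 : ℂ) / 2)
  let b : Qsqrt d := ⟨(t + r * z) / 2, div_mem (add_mem (intCast_mem _ t)
    (mul_mem (SubfieldClass.ratCast_mem _ r) hmem)) (ofNat_mem _ 2)⟩
  have hb : b * (t - b) = M := Subtype.ext <| by
    have hrC : (d : ℂ) * r ^ 2 = t ^ 2 - 4 * M := mod_cast hr
    change (t + r * z) / 2 * (t - (t + r * z) / 2) = (M : ℂ)
    linear_combination -(r ^ 2 * hsq + hrC) / 4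
  have hbre : (b : ℂ).re = t / 2 := by simp [b, hre]
  have hbim : (b : ℂ).im = r * z.im / 2 := by simp [b]
  have htrace : 2 * (b : ℂ).re = t := by rw [hbre]; ring
  have hnorm : Complex.normSq b = M := by
    have hrR : (d : ℝ) * r ^ 2 = t ^ 2 - 4 * M := mod_cast hr
    rw [Complex.normSq_apply, hbre, hbim]
    linear_combination (r ^ 2 * him - hrR) / 4
  exact ⟨⟨b, (mem_integralClosure_iff ℤ _).2 (isIntegral_of_mul_sub_eq hb)⟩, htrace, hnorm⟩

end Qsqrt

open Qsqrt in
lemma dvd_classNumSqrt {d : ℤ} (hd : d < 0) (hd3 : ¬ IsSquare (-3 * d)) {n : ℕ} (hn : Odd n)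
    {t W : ℤ} {r : ℚ} (hr : d * r ^ 2 = t ^ 2 - 4 * W ^ n) (ht : t ≠ 0) (hcop : IsCoprime t W)
    (hW : n * |t| ^ n < W) : n ∣ classNumSqrt d := by
  have hWpos : 0 < W := lt_of_le_of_lt (by positivity) hW
  obtain ⟨β, hβt, hβN⟩ :=
    exists_ringOfIntegers_two_mul_re_eq_normSq_eq (M := W ^ n) hd (mod_cast hr)
  have hmul : β * (t - β) = W ^ n := by exact_mod_cast mul_trace_sub_eq_norm hβt hβN
  refine dvd_natCard_classGroup_of_mul_eq_pow hn.pos.ne' ?_ ?_ hmul fun p hp hpn α hα => ?_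
  · rintro rfl
    rw [zero_mul] at hmul
    exact pow_ne_zero n (Int.cast_ne_zero.2 hWpos.ne') hmul.symm
  · obtain ⟨x, y, hxy⟩ := hcop.pow_right (n := n)
    have hxy' : (x : 𝓞 (Qsqrt d)) * t + y * W ^ n = 1 := mod_cast hxy
    exact ⟨x + y * (t - β), x, by linear_combination hxy' + y * hmul⟩
  have hpodd : Odd p := hn.of_dvd_nat hpn
  obtain ⟨γ, rfl⟩ := exists_pow_eq_of_associated_pow (units_pow_four_eq_one hd hd3)
    (hpodd.coprime_two_right.pow_right 2) hα
  obtain ⟨a, N, -, ha, hN, -⟩ := exists_two_mul_re_eq_normSq_eq hd γ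
  simp only [map_pow, SubmonoidClass.coe_pow] at hβt hβN
  have hWN : W ≤ N := by
    refine le_of_pow_le_pow_left₀ hp.ne_zero N.cast_nonneg ?_
    have hNW : (N : ℤ) ^ p = W ^ n := by rw [hN] at hβN; exact_mod_cast hβN
    exact hNW ▸ pow_le_pow_right₀ hWpos (Nat.le_of_dvd hn.pos hpn)
  have htrace : (dickson 1 (N : ℤ) p).eval a = t := by
    rw [two_mul_re_pow, ha, hN, ← Int.cast_natCast, ← eq_intCast (Int.castRingHom ℝ) N,
      ← map_dickson, eval_intCast_map, eq_intCast] at hβt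
    exact_mod_cast hβt
  refine eval_dickson_ne hpodd hp.ne_one ht (lt_of_le_of_lt ?_ (hW.trans_le hWN)) htrace
  have hpn_le : p ≤ n := Nat.le_of_dvd hn.pos hpn
  exact mul_le_mul (mod_cast hpn_le) (pow_le_pow_right₀ (Int.one_le_abs ht) hpn_le)
    (by positivity) n.cast_nonneg

lemma not_isSquare_neg_three_mul {d : ℤ} (h : ¬ 3 ∣ d) : ¬ IsSquare (-3 * d) := by
  rintro ⟨c, hc⟩
  obtain ⟨e, rfl⟩ : 3 ∣ c := by
    exact or_self_iff.1 (Int.prime_three.dvd_or_dvd (hc ▸ ⟨-d, by ring⟩))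
  exact h ⟨-e ^ 2, by linarith⟩

lemma not_three_dvd_neg_pow_add_sq {n : ℕ} (hn : Odd n) {U : ℤ} (hU : U ≡ -1 [ZMOD 3]) (s : ℤ) :
    ¬ 3 ∣ -U ^ n + s ^ 2 := by
  have hUn : U ^ n ≡ -1 [ZMOD 3] := by simpa only [hn.neg_one_pow] using hU.pow n
  have hs : s ^ 2 ≡ 0 [ZMOD 3] ∨ s ^ 2 ≡ 1 [ZMOD 3] := by
    have hs : s ≡ 0 [ZMOD 3] ∨ s ≡ 1 [ZMOD 3] ∨ s ≡ -1 [ZMOD 3] := by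
      simp only [Int.ModEq]; omega
    rcases hs with h | h | h
    · exact .inl (h.pow 2)
    · exact .inr (h.pow 2)
    · exact .inr (h.pow 2)
  simp only [Int.ModEq] at hUn hs
  omega

lemma dvd_classNumSqrt_neg_pow {n : ℕ} (hn : Odd n) {U V : ℤ} (hUV : U + 1 = 4 * V ^ n)
    (hU : 0 < U) (hU3 : U ≡ -1 [ZMOD 3]) (hV : n < V) : n ∣ classNumSqrt (-U ^ n) := by
  have h3 := not_three_dvd_neg_pow_add_sq hn hU3 0
  rw [zero_pow two_ne_zero, add_zero] at h3
  obtain ⟨j, rfl⟩ := hn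
  refine dvd_classNumSqrt (t := 1) (W := V) (r := 1 / U ^ j) (neg_neg_of_pos (pow_pos hU _))
    (not_isSquare_neg_three_mul h3) ⟨j, rfl⟩ ?_ one_ne_zero isCoprime_one_left (by simpa using hV)
  have hU0 : (U : ℚ) ≠ 0 := mod_cast hU.ne'
  have hUV' : (U : ℚ) + 1 = 4 * V ^ (2 * j + 1) := mod_cast hUV
  calc ((-U ^ (2 * j + 1) : ℤ) : ℚ) * (1 / U ^ j) ^ 2 = -U := by push_cast; field_simp [hU0]; ring
    _ = (1 : ℤ) ^ 2 - 4 * V ^ (2 * j + 1) := by push_cast; linear_combination -hUV'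

lemma dvd_classNumSqrt_neg_pow_add_sq {n : ℕ} (hn : Odd n) {U s : ℤ} (hs : s ≠ 0)
    (hsU : 2 * s ∣ U + 1) (hU3 : U ≡ -1 [ZMOD 3]) (hneg : -U ^ n + s ^ 2 < 0)
    (hU : n * |2 * s| ^ n < U) : n ∣ classNumSqrt (-U ^ n + s ^ 2) := by
  refine dvd_classNumSqrt (t := 2 * s) (W := U) (r := 2) hneg
    (not_isSquare_neg_three_mul (not_three_dvd_neg_pow_add_sq hn hU3 s)) hn ?_
    (mul_ne_zero two_ne_zero hs) ?_ hU
  · push_cast; ring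
  · obtain ⟨c, hc⟩ := hsU
    exact ⟨c, -1, by linear_combination -hc⟩

lemma exists_add_one_eq_four_mul_pow {n : ℕ} (hn : n ≠ 0) (m : ℕ) (B : ℤ) :
    ∃ U V : ℤ, U + 1 = 4 * V ^ n ∧ B < U ∧ B < V ∧ U ≡ -1 [ZMOD 3] ∧
      ∀ s : ℕ, s ≠ 0 → s ≤ m → (2 * s : ℤ) ∣ U + 1 := by
  let V : ℤ := 3 * m.factorial * (|B| + 1)
  have hBV : |B| + 1 ≤ V :=
    le_mul_of_one_le_left (by positivity) (by have := m.factorial_pos; omega)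
  have hVn : V ≤ V ^ n := le_self_pow₀ (by linarith [abs_nonneg B]) hn
  refine ⟨4 * V ^ n - 1, V, by ring, ?_, ?_, ?_, fun s hs hsm => ?_⟩
  · linarith [le_abs_self B, abs_nonneg B]
  · linarith [le_abs_self B]
  · have h3 : 3 ∣ V ^ n := dvd_pow ⟨m.factorial * (|B| + 1), mul_assoc _ _ _⟩ hn
    exact Int.modEq_iff_dvd.2 (by omega)
  · have hsV : (s : ℤ) ∣ V :=
      .mul_right (.mul_left (mod_cast Nat.dvd_factorial hs.pos hsm) 3) (|B| + 1)
    rw [sub_add_cancel]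
    exact mul_dvd_mul (by norm_num) (dvd_pow hsV hn)

theorem infinite_tuples_classNumber_dvd_general (n m : ℕ) (hn : Odd n) :
    {d : ℤ | ∀ s : ℕ, s ≤ m → d + s ^ 2 < 0 ∧ n ∣ classNumSqrt (d + s ^ 2)}.Infinite := by
  refine Set.infinite_of_forall_exists_lt fun b => ?_
  obtain ⟨U, V, hUV, hU, hV, hU3, hsU⟩ := exists_add_one_eq_four_mul_pow hn.pos.ne' m
    (n * (2 * m) ^ n + m ^ 2 + |b| + n)
  have hpow_nonneg : 0 ≤ (n : ℤ) * (2 * m) ^ n := by positivity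
  have hU0 : 0 < U := lt_of_le_of_lt (by positivity) hU
  have hUn : U ≤ U ^ n := le_self_pow₀ hU0 hn.pos.ne'
  refine ⟨-U ^ n, fun s hsm => ?_, by linarith [neg_abs_le b, sq_nonneg (m : ℤ)]⟩
  have hneg : -U ^ n + s ^ 2 < 0 := by
    have : (s : ℤ) ^ 2 ≤ m ^ 2 := by gcongr
    linarith [abs_nonneg b]
  refine ⟨hneg, ?_⟩
  rcases eq_or_ne s 0 with rfl | hs
  · have := dvd_classNumSqrt_neg_pow hn hUV hU0 hU3 (by linarith [abs_nonneg b, sq_nonneg (m : ℤ)])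
    simpa using this
  · refine dvd_classNumSqrt_neg_pow_add_sq hn (mod_cast hs) (hsU s hs hsm) hU3 hneg ?_
    have : n * |2 * (s : ℤ)| ^ n ≤ n * (2 * m) ^ n := by
      rw [abs_of_nonneg (by positivity)]
      gcongr
    linarith [abs_nonneg b, sq_nonneg (m : ℤ)]

/-- For any odd positive integer `n` and any integer `m ≥ 3`, there are infinitely many
integers `d` (with all relevant radicands negative) such that `n` divides the class
numbers of `ℚ(√d)`, `ℚ(√(d+1))`, `ℚ(√(d+4))`, and `ℚ(√(d+4q²))` for every odd prime
`q ≤ m`; this yields tuples of at least `π(m) + 2` imaginary quadratic fields whose class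
numbers are all divisible by `n`. -/
theorem infinite_tuples_classNumber_dvd
    (n m : ℕ) (hn : Odd n) (hnpos : 0 < n) (hm : 3 ≤ m) :
    {d : ℤ | d < 0 ∧ d + 1 < 0 ∧ d + 4 < 0 ∧
      (∀ q : ℕ, q.Prime → Odd q → q ≤ m → d + 4 * (q : ℤ) ^ 2 < 0) ∧
      n ∣ classNumSqrt d ∧ n ∣ classNumSqrt (d + 1) ∧ n ∣ classNumSqrt (d + 4) ∧
      (∀ q : ℕ, q.Prime → Odd q → q ≤ m →
        n ∣ classNumSqrt (d + 4 * (q : ℤ) ^ 2))}.Infinite := by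
  refine (infinite_tuples_classNumber_dvd_general n (2 * m) hn).mono fun d hd => ?_
  have hq (q : ℕ) (hqm : q ≤ m) :
      d + 4 * (q : ℤ) ^ 2 < 0 ∧ n ∣ classNumSqrt (d + 4 * (q : ℤ) ^ 2) := by
    simpa [mul_pow] using hd (2 * q) (Nat.mul_le_mul_left 2 hqm)
  have h0 : d < 0 ∧ n ∣ classNumSqrt d := by simpa using hd 0 (by omega)
  have h1 : d + 1 < 0 ∧ n ∣ classNumSqrt (d + 1) := by simpa using hd 1 (by omega)
  have h4 : d + 4 < 0 ∧ n ∣ classNumSqrt (d + 4) := by simpa using hq 1 (by omega)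
  exact ⟨h0.1, h1.1, h4.1, fun q _ _ hqm => (hq q hqm).1, h0.2, h1.2, h4.2,
    fun q _ _ hqm => (hq q hqm).2⟩
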